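/- arXiv:1804.01325 — 6 statements merged into one kernel-verified Lean document; each statement's English description precedes it below -/
import Mathlib

section
/- Let A be an n×n real positive semidefinite matrix and let A† be its Moore-Penrose inverse. If S ⊆ {1,…,n} is a subset such that the principal submatrix A[S,S] is nonsingular, then the principal submatrix A†[S,S] is also nonsingular. -/
open Matrix

/-! A Moore-Penrose inverse `B` of a positive semidefinite matrix `A` is Hermitian by uniqueness,
so `B = Bᴴ * A * B` is positive semidefinite; and `A = A * A * B`, so the kernel of `B` lies in that
of `A`. If `v` is annihilated by the principal submatrix of `B` and `x` is `v` extended by zero,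
then `star x ⬝ᵥ B *ᵥ x = 0`, so `B *ᵥ x = 0`, hence `A *ᵥ x = 0`, and `v` is annihilated by the
principal submatrix of `A` as well. -/

section MoorePenrose

variable {m n R : Type*} [Fintype m] [Fintype n] [NonUnitalSemiring R] [StarRing R]

/-- `B` is the Moore-Penrose inverse of the rectangular matrix `A`, characterised by the four
Penrose equations; transposition is conjugate so that complex matrices are covered. -/
structure IsMoorePenroseInverse (A : Matrix m n R) (B : Matrix n m R) : Prop where
  mul_mul_eq_left : A * B * A = A
  mul_mul_eq_right : B * A * B = B
  isHermitian_mul : (A * B).IsHermitian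
  isHermitian_mul_swap : (B * A).IsHermitian

namespace IsMoorePenroseInverse

variable {A : Matrix m n R} {B C : Matrix n m R}

theorem conjTranspose (h : IsMoorePenroseInverse A B) : IsMoorePenroseInverse Aᴴ Bᴴ where
  mul_mul_eq_left := by
    rw [← conjTranspose_mul, ← conjTranspose_mul, ← Matrix.mul_assoc, h.mul_mul_eq_left]
  mul_mul_eq_right := by
    rw [← conjTranspose_mul, ← conjTranspose_mul, ← Matrix.mul_assoc, h.mul_mul_eq_right]
  isHermitian_mul := by
    rw [← conjTranspose_mul]
    exact h.isHermitian_mul_swap.conjTranspose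
  isHermitian_mul_swap := by
    rw [← conjTranspose_mul]
    exact h.isHermitian_mul.conjTranspose

theorem mul_eq_mul (hB : IsMoorePenroseInverse A B) (hC : IsMoorePenroseInverse A C) :
    A * B = A * C :=
  calc
    A * B = A * C * (A * B) := by rw [← Matrix.mul_assoc, hC.mul_mul_eq_left]
    _ = (A * B * (A * C))ᴴ := by
      rw [conjTranspose_mul, hC.isHermitian_mul.eq, hB.isHermitian_mul.eq]
    _ = A * C := by rw [← Matrix.mul_assoc, hB.mul_mul_eq_left, hC.isHermitian_mul.eq]

theorem mul_eq_mul_swap (hB : IsMoorePenroseInverse A B) (hC : IsMoorePenroseInverse A C) :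
    B * A = C * A :=
  conjTranspose_injective <| by
    simpa only [conjTranspose_mul] using hB.conjTranspose.mul_eq_mul hC.conjTranspose

theorem unique (hB : IsMoorePenroseInverse A B) (hC : IsMoorePenroseInverse A C) : B = C :=
  calc
    B = B * (A * B) := by rw [← Matrix.mul_assoc, hB.mul_mul_eq_right]
    _ = C * A * C := by rw [hB.mul_eq_mul hC, ← Matrix.mul_assoc, hB.mul_eq_mul_swap hC]
    _ = C := hC.mul_mul_eq_right

theorem isHermitian {A B : Matrix n n R} (h : IsMoorePenroseInverse A B) (hA : A.IsHermitian) :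
    B.IsHermitian :=
  unique (hA.eq ▸ h.conjTranspose) h

theorem conjTranspose_mulVec_eq_zero (h : IsMoorePenroseInverse A B) {x : m → R}
    (hx : B *ᵥ x = 0) : Aᴴ *ᵥ x = 0 := by
  have hA : Aᴴ = Aᴴ * A * B := by
    conv_lhs =>
      rw [← h.mul_mul_eq_left, conjTranspose_mul, h.isHermitian_mul.eq, ← Matrix.mul_assoc]
  rw [hA, ← mulVec_mulVec, hx, mulVec_zero]

theorem posSemidef {R : Type*} [Ring R] [PartialOrder R] [StarRing R] {A B : Matrix n n R}
    (h : IsMoorePenroseInverse A B) (hA : A.PosSemidef) : B.PosSemidef := by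
  have hB : Bᴴ * A * B = B := by rw [(h.isHermitian hA.isHermitian).eq, h.mul_mul_eq_right]
  exact hB ▸ hA.conjTranspose_mul_mul_same B

end IsMoorePenroseInverse

end MoorePenrose

section Compression

theorem submatrix_eq_mul_mul {k l m n R : Type*} [Fintype m] [Fintype n] [DecidableEq m]
    [DecidableEq n] [NonAssocSemiring R] (M : Matrix m n R) (r : k → m) (c : l → n) :
    M.submatrix r c =
      (1 : Matrix m m R).submatrix r id * M * (1 : Matrix n n R).submatrix id c := by
  ext
  simp [mul_apply, one_apply]

variable {m n R : Type*} [Fintype n] [CommRing R] [PartialOrder R] [StarRing R] [StarOrderedRing R]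

/- Over `RCLike` this is `PosSemidef.dotProduct_mulVec_zero_iff`, proved with a square root of `B`.
Square roots may not exist over `R`, so the form is evaluated at a combination of `x` and
`z = B *ᵥ x` instead; the coefficients are chosen so that no division is needed. -/
theorem posSemidef_dotProduct_mulVec_eq_zero_iff [NoZeroDivisors R] {B : Matrix n n R}
    (hB : B.PosSemidef) (x : n → R) : star x ⬝ᵥ B *ᵥ x = 0 ↔ B *ᵥ x = 0 := by
  refine ⟨fun hx ↦ ?_, fun hx ↦ by rw [hx, dotProduct_zero]⟩
  set z := B *ᵥ x with hz
  set c := star z ⬝ᵥ z with hc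
  set d := star z ⬝ᵥ B *ᵥ z with hd
  have hc_nonneg : 0 ≤ c := dotProduct_star_self_nonneg z
  have hd_nonneg : 0 ≤ d := hB.dotProduct_mulVec_nonneg z
  have hc_star : star c = c := (IsSelfAdjoint.of_nonneg hc_nonneg).star_eq
  have hd_star : star d = d := (IsSelfAdjoint.of_nonneg hd_nonneg).star_eq
  have hxz : star x ⬝ᵥ B *ᵥ z = c := by
    rw [dotProduct_mulVec, ← hB.isHermitian.eq, ← star_mulVec]
  have hform : 0 ≤ -(c * d * c + c * c + c * c) := by
    convert hB.dotProduct_mulVec_nonneg ((d + 1) • x - c • z) using 1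
    simp only [star_sub, star_smul, star_add, star_one, hc_star, hd_star, mulVec_sub, mulVec_smul,
      sub_dotProduct, dotProduct_sub, smul_dotProduct, dotProduct_smul, smul_eq_mul, hx, hxz,
      ← hz, ← hc, ← hd]
    ring
  have hcdc : 0 ≤ c * d * c := conjugate_nonneg_of_nonneg hd_nonneg hc_nonneg
  have hcc : 0 ≤ c * c := by simpa only [hc_star] using star_mul_self_nonneg c
  have hcc_zero : c * c = 0 :=
    hcc.antisymm' <| (le_add_of_nonneg_left (add_nonneg hcdc hcc)).trans (neg_nonneg.mp hform)
  exact dotProduct_star_self_eq_zero.mp (mul_self_eq_zero.mp hcc_zero)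

theorem det_conjTranspose_mul_mul_ne_zero [IsDomain R] [Fintype m] [DecidableEq m]
    {A B : Matrix n n R} (hB : B.PosSemidef) (hker : ∀ x, B *ᵥ x = 0 → A *ᵥ x = 0)
    (E : Matrix n m R) (hA : (Eᴴ * A * E).det ≠ 0) : (Eᴴ * B * E).det ≠ 0 := by
  contrapose! hA
  obtain ⟨v, hv, hBv⟩ := exists_mulVec_eq_zero_iff.mpr hA
  have hquad : star (E *ᵥ v) ⬝ᵥ B *ᵥ (E *ᵥ v) = 0 := by
    rw [star_mulVec, ← dotProduct_mulVec, mulVec_mulVec, mulVec_mulVec, hBv, dotProduct_zero]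
  have hAv : A *ᵥ (E *ᵥ v) = 0 := hker _ ((posSemidef_dotProduct_mulVec_eq_zero_iff hB _).mp hquad)
  refine exists_mulVec_eq_zero_iff.mp ⟨v, hv, ?_⟩
  rw [← mulVec_mulVec, ← mulVec_mulVec, hAv, mulVec_zero]

theorem psd_mp_principal_submatrix_nonsingular_general [IsDomain R] [Fintype m] [DecidableEq m]
    {A B : Matrix n n R} (hA : A.PosSemidef) (hAB : IsMoorePenroseInverse A B) (e : m → n)
    (hdet : (A.submatrix e e).det ≠ 0) : (B.submatrix e e).det ≠ 0 := by
  classical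
  have hcompress (M : Matrix n n R) : M.submatrix e e =
      ((1 : Matrix n n R).submatrix id e)ᴴ * M * (1 : Matrix n n R).submatrix id e := by
    rw [conjTranspose_submatrix, conjTranspose_one, submatrix_eq_mul_mul]
  rw [hcompress] at hdet ⊢
  have hker (x : n → R) (hx : B *ᵥ x = 0) : A *ᵥ x = 0 :=
    hA.isHermitian.eq ▸ hAB.conjTranspose_mulVec_eq_zero hx
  exact det_conjTranspose_mul_mul_ne_zero (hAB.posSemidef hA) hker _ hdet

end Compression

/-- If `A` is a real positive semidefinite matrix with Moore-Penrose inverse `Adag`,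
and the principal submatrix `A[S,S]` is nonsingular, then `Adag[S,S]` is nonsingular. -/
theorem psd_mp_principal_submatrix_nonsingular
    (N : ℕ) (A Adag : Matrix (Fin N) (Fin N) ℝ)
    (hA : A.PosSemidef)
    (h1 : A * Adag * A = A) (h2 : Adag * A * Adag = Adag)
    (h3 : (A * Adag)ᵀ = A * Adag) (h4 : (Adag * A)ᵀ = Adag * A)
    (S : Finset (Fin N))
    (hS : IsUnit (A.submatrix (fun i : S => (i : Fin N)) (fun i : S => (i : Fin N))).det) :
    IsUnit (Adag.submatrix (fun i : S => (i : Fin N)) (fun i : S => (i : Fin N))).det :=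
  (psd_mp_principal_submatrix_nonsingular_general hA ⟨h1, h2, h3, h4⟩ _ hS.ne_zero).isUnit
end

section
/- Let A be an ns×ns real matrix partitioned into n² blocks A_{i,j} (1 ≤ i,j ≤ n), each of size s×s, where the block A_{i,j} occupies rows (i−1)s+1,…,is and columns (j−1)s+1,…,js. If Σ_{j=1}^n A_{i,j} = 0 for every i and Σ_{i=1}^n A_{i,j} = 0 for every j, then the cofactors of any two blocks of A are equal; that is, for all i, j, k, l in {1,…,n}, the cofactor of A_{i,j} equals the cofactor of A_{k,l}. -/
open Matrix Finset

noncomputable section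

/-- The cofactor of the `(i,j)`-th `s × s` block of an `(n+1)s × (n+1)s` matrix `A`
(blocks indexed by `Fin (n+1) × Fin s`): the sign `(-1)^σ`, where `σ` is the sum of the
(1-based) indices of the deleted rows and columns, times the determinant of the matrix
obtained from `A` by deleting the `i`-th block row and the `j`-th block column
(realised via `Fin.succAbove`).  Here the 1-based deleted row indices are
`i*s + 1, …, i*s + s` (for `i : Fin (n+1)`, 0-based), so
`σ = s^2*(i + j) + s*(s+1)`. -/
def blockCofactor {n s : ℕ} (A : Matrix (Fin (n + 1) × Fin s) (Fin (n + 1) × Fin s) ℝ)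
    (i j : Fin (n + 1)) : ℝ :=
  (-1 : ℝ) ^ (s ^ 2 * ((i : ℕ) + (j : ℕ)) + s * (s + 1)) *
    (A.submatrix
      (fun p : Fin n × Fin s => (i.succAbove p.1, p.2))
      (fun p : Fin n × Fin s => (j.succAbove p.1, p.2))).det

open scoped Kronecker

/-!
Let `B` have vanishing block-row sums, and let `B₀` be `B` without its zeroth block column. Then
`B = B₀ * (K ⊗ₖ 1)` for the scalar matrix `K = (-1 | 1)`. Deleting the `j`-th block column on both
sides and taking determinants leaves `det B₀ * (det Kⱼ) ^ s`, where `Kⱼ` is `K` without its `j`-th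
column. As `K` has zero row sums, the scalar case of the theorem gives `det Kⱼ = (-1) ^ j`. Block
rows are treated by transposition.
-/

/-- The coefficients expressing vectors `v₀, …, vₙ` with `v₀ + ⋯ + vₙ = 0` through `v₁, …, vₙ`:
column `0` is constantly `-1`, as `v₀ = -(v₁ + ⋯ + vₙ)`, and the columns `1, …, n` form the
identity. -/
def zeroSumCoeff (R : Type*) [Ring R] (n : ℕ) : Matrix (Fin n) (Fin (n + 1)) R :=
  of fun p => Fin.cons (-1) ((1 : Matrix (Fin n) (Fin n) R) p)

lemma sum_zeroSumCoeff (R : Type*) [Ring R] {n : ℕ} (p : Fin n) :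
    ∑ j, zeroSumCoeff R n p j = 0 := by
  simp [zeroSumCoeff, Fin.sum_univ_succ, one_apply]

lemma zeroSumCoeff_submatrix_succ (R : Type*) [Ring R] (n : ℕ) :
    (zeroSumCoeff R n).submatrix id Fin.succ = 1 :=
  rfl

lemma det_zeroSumCoeff_submatrix_succAbove (R : Type*) [CommRing R] {n : ℕ} (j : Fin (n + 1)) :
    ((zeroSumCoeff R n).submatrix id j.succAbove).det = (-1) ^ (j : ℕ) := by
  rw [submatrix_succAbove_det_eq_negOnePow_submatrix_succAbove_det' _ (sum_zeroSumCoeff R) j 0,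
    Fin.succAbove_zero, zeroSumCoeff_submatrix_succ]
  simp [Int.negOnePow_def, Units.smul_def]

lemma eq_submatrix_succ_mul_kronecker_zeroSumCoeff {R ι m : Type*} [Ring R]
    [Fintype m] [DecidableEq m] {n : ℕ} (B : Matrix ι (Fin (n + 1) × m) R)
    (hB : ∀ x b, ∑ j, B x (j, b) = 0) :
    B = B.submatrix id (Prod.map Fin.succ id) * zeroSumCoeff R n ⊗ₖ (1 : Matrix m m R) := by
  ext x ⟨j, b⟩
  have hentry : (B.submatrix id (Prod.map Fin.succ id) * zeroSumCoeff R n ⊗ₖ (1 : Matrix m m R))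
      x (j, b) = ∑ q : Fin n, B x (q.succ, b) * zeroSumCoeff R n q j := by
    simp [mul_apply, Fintype.sum_prod_type, one_apply]
  rw [hentry]
  cases j using Fin.cases with
  | zero =>
    have hsum := hB x b
    rw [Fin.sum_univ_succ] at hsum
    simpa [zeroSumCoeff] using eq_neg_of_add_eq_zero_left hsum
  | succ k => simp [zeroSumCoeff, one_apply]

/-- The unsigned counterpart of `blockCofactor`, over any commutative ring and with the positions
inside a block indexed by any finite type `m`. -/
def blockMinor {R m : Type*} [CommRing R] [Fintype m] [DecidableEq m] {n : ℕ}
    (A : Matrix (Fin (n + 1) × m) (Fin (n + 1) × m) R) (i j : Fin (n + 1)) : R :=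
  (A.submatrix (Prod.map i.succAbove id) (Prod.map j.succAbove id)).det

section BlockMinor

variable {R m : Type*} [CommRing R] [Fintype m] [DecidableEq m] {n : ℕ}

lemma det_submatrix_succAbove_of_blockRowSums_eq_zero
    (B : Matrix (Fin n × m) (Fin (n + 1) × m) R) (hB : ∀ x b, ∑ j, B x (j, b) = 0)
    (j : Fin (n + 1)) :
    (B.submatrix id (Prod.map j.succAbove id)).det =
      (-1) ^ (Fintype.card m * j) * (B.submatrix id (Prod.map Fin.succ id)).det := by
  have hfactor : B.submatrix id (Prod.map j.succAbove id) =
      B.submatrix id (Prod.map Fin.succ id) *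
        (zeroSumCoeff R n).submatrix id j.succAbove ⊗ₖ (1 : Matrix m m R) :=
    congrArg (submatrix · id (Prod.map j.succAbove id))
      (eq_submatrix_succ_mul_kronecker_zeroSumCoeff B hB)
  rw [hfactor, det_mul, det_kronecker, det_zeroSumCoeff_submatrix_succAbove, det_one, one_pow,
    mul_one, ← pow_mul, mul_comm (j : ℕ), mul_comm]

lemma blockMinor_transpose (A : Matrix (Fin (n + 1) × m) (Fin (n + 1) × m) R)
    (i j : Fin (n + 1)) : blockMinor Aᵀ i j = blockMinor A j i := by
  rw [blockMinor, ← transpose_submatrix, det_transpose, blockMinor]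

lemma blockMinor_eq_blockMinor_zero_right (A : Matrix (Fin (n + 1) × m) (Fin (n + 1) × m) R)
    (hrow : ∀ x b, ∑ j, A x (j, b) = 0) (i j : Fin (n + 1)) :
    blockMinor A i j = (-1) ^ (Fintype.card m * j) * blockMinor A i 0 := by
  simpa [blockMinor] using det_submatrix_succAbove_of_blockRowSums_eq_zero
    (A.submatrix (Prod.map i.succAbove id) id) (fun _ => hrow _) j

lemma blockMinor_eq_blockMinor_zero_zero (A : Matrix (Fin (n + 1) × m) (Fin (n + 1) × m) R)
    (hrow : ∀ x b, ∑ j, A x (j, b) = 0) (hcol : ∀ y a, ∑ i, A (i, a) y = 0)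
    (i j : Fin (n + 1)) :
    blockMinor A i j = (-1) ^ (Fintype.card m * (i + j)) * blockMinor A 0 0 := by
  rw [blockMinor_eq_blockMinor_zero_right A hrow, ← blockMinor_transpose,
    blockMinor_eq_blockMinor_zero_right Aᵀ hcol, blockMinor_transpose]
  ring

theorem blockCofactor_eq_of_blockRowSums_eq_zero_general
    (A : Matrix (Fin (n + 1) × m) (Fin (n + 1) × m) R)
    (hrow : ∀ x b, ∑ j, A x (j, b) = 0) (hcol : ∀ y a, ∑ i, A (i, a) y = 0)
    (i j k l : Fin (n + 1)) :
    (-1) ^ (Fintype.card m * (i + j)) * blockMinor A i j =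
      (-1) ^ (Fintype.card m * (k + l)) * blockMinor A k l := by
  have hsign (N : ℕ) : (-1 : R) ^ N * (-1) ^ N = 1 := by
    rw [← pow_add, (Even.add_self N).neg_one_pow]
  rw [blockMinor_eq_blockMinor_zero_zero A hrow hcol i j,
    blockMinor_eq_blockMinor_zero_zero A hrow hcol k l, ← mul_assoc, ← mul_assoc, hsign, hsign]

end BlockMinor

lemma blockCofactor_eq_neg_one_pow_mul_blockMinor {n s : ℕ}
    (A : Matrix (Fin (n + 1) × Fin s) (Fin (n + 1) × Fin s) ℝ) (i j : Fin (n + 1)) :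
    blockCofactor A i j =
      (-1) ^ (Fintype.card (Fin s) * ((i : ℕ) + (j : ℕ))) * blockMinor A i j := by
  have hparity : Even (s ^ 2 * ((i : ℕ) + j) + s * (s + 1)) ↔ Even (s * ((i : ℕ) + j)) := by
    rw [Nat.even_add, iff_true_right (Nat.even_mul_succ_self s)]
    simp [Nat.even_mul, Nat.even_pow]
  rw [Fintype.card_fin, ← neg_one_pow_congr hparity]
  rfl

/-- If all block-row sums and all block-column sums of a block matrix `A` vanish,
then the cofactors of any two blocks of `A` are equal. -/
theorem blockCofactor_eq_of_blockRowSums_eq_zero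
    (n s : ℕ) (A : Matrix (Fin (n + 1) × Fin s) (Fin (n + 1) × Fin s) ℝ)
    (hrow : ∀ (i : Fin (n + 1)) (a b : Fin s), ∑ j : Fin (n + 1), A (i, a) (j, b) = 0)
    (hcol : ∀ (j : Fin (n + 1)) (a b : Fin s), ∑ i : Fin (n + 1), A (i, a) (j, b) = 0) :
    ∀ i j k l : Fin (n + 1), blockCofactor A i j = blockCofactor A k l := by
  intro i j k l
  simpa only [blockCofactor_eq_neg_one_pow_mul_blockMinor] using
    blockCofactor_eq_of_blockRowSums_eq_zero_general A (fun x => hrow x.1 x.2)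
      (fun y a => hcol y.1 a y.2) i j k l
end
end

section
/- For each i = 1,…,n, the s×s matrix X_{ii} − (1/n) I_s is positive definite. -/
open Matrix Finset
open scoped Kronecker

noncomputable section

/-- The `ns × s` matrix `1 ⊗ Iₛ`, where `1` is the all-ones column vector. -/
def oneKron (n s : ℕ) : Matrix (Fin n × Fin s) (Fin s) ℝ :=
  Matrix.of fun p b => if p.2 = b then 1 else 0

/-- The `ns × ns` matrix `J ⊗ Iₛ`, where `J` is the all-ones matrix. -/
def JKron (n s : ℕ) : Matrix (Fin n × Fin s) (Fin n × Fin s) ℝ :=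
  (Matrix.of fun _ _ : Fin n => (1 : ℝ)) ⊗ₖ (1 : Matrix (Fin s) (Fin s) ℝ)

/-- The Laplacian matrix of a graph whose edges `{i,j}` are weighted by
positive definite `s × s` matrices `W i j`: the `(i,i)` block is
`Σ_{j ∼ i} (W i j)⁻¹`, the `(i,j)` block for `i ≠ j` is `-(W i j)⁻¹` if `i ∼ j`
and `0` otherwise. -/
def lap {n s : ℕ} (G : SimpleGraph (Fin n)) [DecidableRel G.Adj]
    (W : Fin n → Fin n → Matrix (Fin s) (Fin s) ℝ) :
    Matrix (Fin n × Fin s) (Fin n × Fin s) ℝ :=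
  Matrix.of fun p q =>
    if p.1 = q.1 then (∑ k ∈ univ.filter (fun k => G.Adj p.1 k), (W p.1 k)⁻¹) p.2 q.2
    else if G.Adj p.1 q.1 then -((W p.1 q.1)⁻¹ p.2 q.2) else 0

/-- The four Penrose conditions: `Adag` is a Moore–Penrose inverse of `A`. -/
def IsMoorePenrose {m : Type*} [Fintype m] (A Adag : Matrix m m ℝ) : Prop :=
  A * Adag * A = A ∧ Adag * A * Adag = Adag ∧ (A * Adag)ᵀ = A * Adag ∧ (Adag * A)ᵀ = Adag * A

/-- The `s × s` block of an `ns × ns` matrix in block position `(i, j)`. -/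
def blk {n s : ℕ} (A : Matrix (Fin n × Fin s) (Fin n × Fin s) ℝ) (i j : Fin n) :
    Matrix (Fin s) (Fin s) ℝ :=
  Matrix.of fun a b => A (i, a) (j, b)

/-- The resistance matrix built from a Moore–Penrose inverse `Ldag` of the Laplacian:
its `(i,j)` block is `K_{ii} + K_{jj} - 2 K_{ij}`, where `K_{ij}` are the blocks of `Ldag`. -/
def resist {n s : ℕ} (Ldag : Matrix (Fin n × Fin s) (Fin n × Fin s) ℝ) :
    Matrix (Fin n × Fin s) (Fin n × Fin s) ℝ :=
  Matrix.of fun p q =>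
    Ldag (p.1, p.2) (p.1, q.2) + Ldag (q.1, p.2) (q.1, q.2) - 2 * Ldag p q

/-- The `ns × s` matrix `τ`, whose `i`-th block is `2 Iₛ - Σ_{j ∼ i} (W i j)⁻¹ R_{ji}`. -/
def tauMat {n s : ℕ} (G : SimpleGraph (Fin n)) [DecidableRel G.Adj]
    (W : Fin n → Fin n → Matrix (Fin s) (Fin s) ℝ)
    (R : Matrix (Fin n × Fin s) (Fin n × Fin s) ℝ) :
    Matrix (Fin n × Fin s) (Fin s) ℝ :=
  Matrix.of fun p b =>
    ((2 : ℝ) • (1 : Matrix (Fin s) (Fin s) ℝ) -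
      ∑ j ∈ univ.filter (fun j => G.Adj p.1 j), (W p.1 j)⁻¹ * blk R j p.1) p.2 b

/-- The block diagonal matrix `X̄` with the same diagonal blocks as `X`. -/
def bdiag {n s : ℕ} (X : Matrix (Fin n × Fin s) (Fin n × Fin s) ℝ) :
    Matrix (Fin n × Fin s) (Fin n × Fin s) ℝ :=
  Matrix.of fun p q => if p.1 = q.1 then X (p.1, p.2) (p.1, q.2) else 0

/-!
The block-constant vectors form the kernel of `L`, and `P = (1/n) J ⊗ Iₛ` is the orthogonal
projection onto it. Hence `L P = P L = 0`, the matrix `X = (L + P)⁻¹` fixes `P` from both sides, and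
`X - P = X L X` is positive semidefinite with kernel inside the range of `P` (it is the
Moore–Penrose inverse of `L`). The matrix `X_{ii} - (1/n) Iₛ` is a diagonal block of `X - P`, so it
can only fail to be definite at a vector supported in block `i` that is also block-constant; as
there is a second block, such a vector is zero.
-/

section Idempotent

variable {R : Type*} {a p x : R}

theorem mul_idempotent_of_mul_add_eq_one [Semiring R] (hp : IsIdempotentElem p)
    (hap : a * p = 0) (hx : x * (a + p) = 1) : x * p = p := by
  calc x * p = x * (a + p) * p := by rw [mul_assoc, add_mul, hap, hp.eq, zero_add]
    _ = p := by rw [hx, one_mul]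

theorem idempotent_mul_of_add_mul_eq_one [Semiring R] (hp : IsIdempotentElem p)
    (hpa : p * a = 0) (hx : (a + p) * x = 1) : p * x = p := by
  calc p * x = p * (a + p) * x := by rw [mul_add, hpa, hp.eq, zero_add]
    _ = p := by rw [mul_assoc, hx, mul_one]

theorem sub_idempotent_eq_mul_mul [Ring R] (hp : IsIdempotentElem p) (hap : a * p = 0)
    (hpa : p * a = 0) (hxl : x * (a + p) = 1) (hxr : (a + p) * x = 1) :
    x - p = x * a * x := by
  have hxap : x * (a + p) * x = x := by rw [hxl, one_mul]
  rw [mul_add, mul_idempotent_of_mul_add_eq_one hp hap hxl, add_mul,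
    idempotent_mul_of_add_mul_eq_one hp hpa hxr] at hxap
  exact sub_eq_of_eq_add hxap.symm

end Idempotent

/-- `P` is the orthogonal projection onto the kernel of the matrix `L`. The range of `P` is
encoded as its set of fixed vectors. -/
structure IsKerProjection {m R : Type*} [Fintype m] [NonUnitalSemiring R] [StarRing R]
    (L P : Matrix m m R) : Prop where
  isStarProjection : IsStarProjection P
  mulVec_eq_zero_iff : ∀ v, L *ᵥ v = 0 ↔ P *ᵥ v = v

namespace IsKerProjection

variable {m : Type*} [Fintype m]

section Semiring

variable {R : Type*} [Semiring R] [StarRing R] {L P : Matrix m m R}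

theorem mul_proj_eq_zero (h : IsKerProjection L P) : L * P = 0 := by
  classical
  refine ext_of_mulVec_single fun i => ?_
  rw [← mulVec_mulVec, zero_mulVec, h.mulVec_eq_zero_iff, mulVec_mulVec,
    h.isStarProjection.isIdempotentElem.eq]

theorem proj_mul_eq_zero (h : IsKerProjection L P) (hL : L.IsHermitian) :
    P * L = 0 := by
  have hP : Pᴴ = P := h.isStarProjection.isSelfAdjoint
  rw [← conjTranspose_eq_zero, conjTranspose_mul, hL.eq, hP, h.mul_proj_eq_zero]

end Semiring

section Field

variable [DecidableEq m] {K : Type*} [Field K] [StarRing K] {L P : Matrix m m K}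

theorem isUnit_add (h : IsKerProjection L P) (hL : L.IsHermitian) : IsUnit (L + P) := by
  rw [← mulVec_injective_iff_isUnit, ← coe_mulVecLin, injective_iff_map_eq_zero]
  intro v hv
  rw [mulVecLin_apply] at hv
  have hPv : P *ᵥ v = 0 := by
    rw [← mulVec_zero P, ← hv, mulVec_mulVec, mul_add, h.proj_mul_eq_zero hL,
      h.isStarProjection.isIdempotentElem.eq, zero_add]
  have hLv : L *ᵥ v = 0 := by rwa [add_mulVec, hPv, add_zero] at hv
  rw [← (h.mulVec_eq_zero_iff v).1 hLv, hPv]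

theorem add_mul_inv (h : IsKerProjection L P) (hL : L.IsHermitian) : (L + P) * (L + P)⁻¹ = 1 :=
  mul_nonsing_inv _ ((isUnit_iff_isUnit_det _).1 (h.isUnit_add hL))

theorem inv_mul_add (h : IsKerProjection L P) (hL : L.IsHermitian) : (L + P)⁻¹ * (L + P) = 1 :=
  nonsing_inv_mul _ ((isUnit_iff_isUnit_det _).1 (h.isUnit_add hL))

theorem inv_add_sub_eq_mul_mul (h : IsKerProjection L P) (hL : L.IsHermitian) :
    (L + P)⁻¹ - P = (L + P)⁻¹ * L * (L + P)⁻¹ :=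
  sub_idempotent_eq_mul_mul h.isStarProjection.isIdempotentElem h.mul_proj_eq_zero
    (h.proj_mul_eq_zero hL) (h.inv_mul_add hL) (h.add_mul_inv hL)

theorem mulVec_eq_self_of_inv_add_sub_mulVec_eq_zero (h : IsKerProjection L P)
    (hL : L.IsHermitian) {v : m → K} (hv : ((L + P)⁻¹ - P) *ᵥ v = 0) : P *ᵥ v = v := by
  rw [sub_mulVec, sub_eq_zero] at hv
  calc P *ᵥ v = (L + P) *ᵥ (P *ᵥ v) := by
        rw [mulVec_mulVec, add_mul, h.mul_proj_eq_zero, h.isStarProjection.isIdempotentElem.eq,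
          zero_add]
    _ = v := by rw [← hv, mulVec_mulVec, h.add_mul_inv hL, one_mulVec]

theorem posSemidef_inv_add_sub [PartialOrder K] (h : IsKerProjection L P)
    (hL : L.PosSemidef) : ((L + P)⁻¹ - P).PosSemidef := by
  have hP : P.IsHermitian := h.isStarProjection.isSelfAdjoint
  have hX : ((L + P)⁻¹)ᴴ = (L + P)⁻¹ := (hL.isHermitian.add hP).inv
  have hXLX := hL.conjTranspose_mul_mul_same (L + P)⁻¹
  rwa [hX, ← h.inv_add_sub_eq_mul_mul hL.isHermitian] at hXLX

end Field

end IsKerProjection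

section PosDef

open scoped ComplexOrder

variable {𝕜 k m : Type*} [RCLike 𝕜] [Fintype m] {A : Matrix m m 𝕜}

theorem posDef_conjTranspose_mul_mul_of_ker [Fintype k] (hA : A.PosSemidef)
    {B : Matrix m k 𝕜} (hB : ∀ x, A *ᵥ (B *ᵥ x) = 0 → x = 0) : (Bᴴ * A * B).PosDef := by
  have hBAB := hA.conjTranspose_mul_mul_same B
  refine .of_dotProduct_mulVec_pos hBAB.isHermitian fun x hx => ?_
  refine (hBAB.dotProduct_mulVec_nonneg x).lt_of_ne' fun hzero => hx (hB x ?_)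
  rw [← hA.dotProduct_mulVec_zero_iff, ← hzero, star_mulVec, ← dotProduct_mulVec]
  simp only [mulVec_mulVec, Matrix.mul_assoc]

theorem posDef_submatrix_of_ker [Finite k] (hA : A.PosSemidef) {e : k → m}
    (he : e.Injective) (hker : ∀ x, A *ᵥ Function.extend e x 0 = 0 → x = 0) :
    (A.submatrix e e).PosDef := by
  classical
  cases nonempty_fintype k
  set E : Matrix m k 𝕜 := (1 : Matrix m m 𝕜).submatrix id e with hE
  have hEx (x : k → 𝕜) : E *ᵥ x = Function.extend e x 0 := by
    ext p
    by_cases hp : ∃ a, e a = p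
    · obtain ⟨a, rfl⟩ := hp
      simp [hE, mulVec, dotProduct, one_apply, he.eq_iff, he.extend_apply]
    · have hne (a : k) : p ≠ e a := fun h => hp ⟨a, h.symm⟩
      simp [hE, mulVec, dotProduct, one_apply, hne, Function.extend_apply' _ _ _ hp]
  have hEAE : A.submatrix e e = Eᴴ * A * E := by
    ext a b
    simp [hE, mul_apply, one_apply]
  rw [hEAE]
  exact posDef_conjTranspose_mul_mul_of_ker hA fun x hx => hker x (hEx x ▸ hx)

end PosDef

/-- The matrix `(1/|ι|) J ⊗ I`, which replaces every block of a vector, indexed by `ι × κ`, by the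
average of its blocks. -/
def blockAverage (ι κ K : Type*) [Fintype ι] [DecidableEq κ] [Field K] :
    Matrix (ι × κ) (ι × κ) K :=
  (Fintype.card ι : K)⁻¹ • ((Matrix.of fun _ _ : ι => (1 : K)) ⊗ₖ (1 : Matrix κ κ K))

namespace blockAverage

variable {ι κ K : Type*} [Fintype ι] [DecidableEq κ] [Field K]

theorem submatrix_mk (i : ι) :
    (blockAverage ι κ K).submatrix (Prod.mk i) (Prod.mk i) = (Fintype.card ι : K)⁻¹ • 1 := by
  ext a b
  simp [blockAverage]

theorem isHermitian [StarRing K] : (blockAverage ι κ K).IsHermitian := by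
  ext p q
  simp [blockAverage, one_apply, eq_comm (a := p.2), apply_ite star]

variable [Fintype κ]

theorem mulVec_eq (v : ι × κ → K) :
    blockAverage ι κ K *ᵥ v =
      (fun b => (Fintype.card ι : K)⁻¹ * ∑ j, v (j, b)) ∘ Prod.snd := by
  ext p
  simp [blockAverage, mulVec, dotProduct, one_apply, Fintype.sum_prod_type, mul_sum]

variable [Nonempty ι] [CharZero K]

theorem mulVec_comp_snd (c : κ → K) :
    blockAverage ι κ K *ᵥ (c ∘ Prod.snd) = c ∘ Prod.snd := by
  ext p
  simp [mulVec_eq]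

theorem mulVec_eq_self_iff (v : ι × κ → K) :
    blockAverage ι κ K *ᵥ v = v ↔ ∃ c : κ → K, v = c ∘ Prod.snd := by
  constructor
  · intro hv
    exact ⟨_, hv.symm.trans (mulVec_eq v)⟩
  · rintro ⟨c, rfl⟩
    exact mulVec_comp_snd c

theorem isStarProjection [StarRing K] : IsStarProjection (blockAverage ι κ K) where
  isIdempotentElem := mulVec_injective <| funext fun v => by
    rw [← mulVec_mulVec, mulVec_eq v, mulVec_comp_snd]
  isSelfAdjoint := isHermitian

end blockAverage

theorem eq_zero_of_extend_mk_eq_comp_snd {ι κ M : Type*} [Nontrivial ι] [Zero M] {i : ι}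
    {x c : κ → M} (h : Function.extend (Prod.mk i) x 0 = c ∘ Prod.snd) : x = 0 := by
  obtain ⟨j, hj⟩ := exists_ne i
  funext a
  have hxc : x a = c a := by
    simpa [(Prod.mk_right_injective i).extend_apply] using congrFun h (i, a)
  have hc : 0 = c a := by
    simpa [Function.extend_apply', hj.symm] using congrFun h (j, a)
  rw [hxc, ← hc, Pi.zero_apply]

open scoped ComplexOrder in
theorem diagBlock_sub_posDef_general {ι κ 𝕜 : Type*} [Fintype ι] [DecidableEq ι] [Nontrivial ι]
    [Fintype κ] [DecidableEq κ] [RCLike 𝕜] {L : Matrix (ι × κ) (ι × κ) 𝕜} (hL : L.PosSemidef)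
    (hker : ∀ v, L *ᵥ v = 0 ↔ ∃ c : κ → 𝕜, v = c ∘ Prod.snd) (i : ι) :
    ((L + blockAverage ι κ 𝕜)⁻¹.submatrix (Prod.mk i) (Prod.mk i) -
      (Fintype.card ι : 𝕜)⁻¹ • (1 : Matrix κ κ 𝕜)).PosDef := by
  have hproj : IsKerProjection L (blockAverage ι κ 𝕜) :=
    ⟨blockAverage.isStarProjection, fun v =>
      (hker v).trans (blockAverage.mulVec_eq_self_iff v).symm⟩
  rw [← blockAverage.submatrix_mk i]
  change (((L + blockAverage ι κ 𝕜)⁻¹ - blockAverage ι κ 𝕜).submatrix _ _).PosDef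
  refine posDef_submatrix_of_ker (hproj.posSemidef_inv_add_sub hL) (Prod.mk_right_injective i)
    fun x hx => ?_
  obtain ⟨c, hc⟩ := (blockAverage.mulVec_eq_self_iff _).1
    (hproj.mulVec_eq_self_of_inv_add_sub_mulVec_eq_zero hL.isHermitian hx)
  exact eq_zero_of_extend_mk_eq_comp_snd hc

theorem oneKron_mulVec {n s : ℕ} (c : Fin s → ℝ) : oneKron n s *ᵥ c = c ∘ Prod.snd := by
  ext p
  simp [oneKron, mulVec, dotProduct]

theorem blockAverage_fin (n s : ℕ) :
    blockAverage (Fin n) (Fin s) ℝ = (n : ℝ)⁻¹ • JKron n s := by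
  rw [blockAverage, JKron, Fintype.card_fin]

/-- Each diagonal block satisfies: `X_{ii} - (1/n) Iₛ` is positive definite. -/
theorem diagBlock_sub_posDef
    (n s : ℕ) (hn : 2 ≤ n) (hs : 1 ≤ s)
    (G : SimpleGraph (Fin n)) [DecidableRel G.Adj] (hconn : G.Connected)
    (W : Fin n → Fin n → Matrix (Fin s) (Fin s) ℝ)
    (hWsymm : ∀ i j, W i j = W j i)
    (hWpd : ∀ i j, G.Adj i j → (W i j).PosDef)
    (hPSD : (lap G W).PosSemidef)
    (hrank : (lap G W).rank = n * s - s)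
    (hker : ∀ v : Fin n × Fin s → ℝ,
      lap G W *ᵥ v = 0 ↔ ∃ c : Fin s → ℝ, v = oneKron n s *ᵥ c)
    (X : Matrix (Fin n × Fin s) (Fin n × Fin s) ℝ)
    (hX : X = (lap G W + ((n : ℝ)⁻¹) • JKron n s)⁻¹) :
    ∀ i : Fin n, (blk X i i - ((n : ℝ)⁻¹) • (1 : Matrix (Fin s) (Fin s) ℝ)).PosDef := by
  have : Nontrivial (Fin n) := Fin.nontrivial_iff_two_le.2 hn
  simp only [oneKron_mulVec] at hker
  rw [hX, ← blockAverage_fin]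
  simpa only [Fintype.card_fin] using! diagBlock_sub_posDef_general hPSD hker
end
end

section
/- L X̄ (1 ⊗ I_s) + (2/n)(1 ⊗ I_s) = τ. -/
open Matrix Finset
open scoped Kronecker

noncomputable section

/-!
Let `K` be the Moore–Penrose inverse of `L` and `P = (1/n) J ⊗ Iₛ`, the orthogonal projection onto
`ker L`. Then `X = K + P` and `L K = 1 - P`. The `i`-th block row of `L M` is
`Σ_{j ∼ i} (W i j)⁻¹ (M i - M j)`, so writing `R j i = 2 (K i i - K j i) - (K i i - K j j)` gives
`τ = L K̄ (1 ⊗ Iₛ) + 2 D (1 ⊗ Iₛ)`, where `D` is the block diagonal part of `1 - L K = P`, that is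
`D = (1/n) I`. Finally `X̄ - K̄ = (1/n) I`, and this difference disappears since `L (1 ⊗ Iₛ) = 0`.
-/

/-- `P` is the matrix of the orthogonal projection onto the kernel of `A`; idempotence of `P`
is a consequence and therefore not a field. -/
structure IsKerProj {m : Type*} [Fintype m] (A P : Matrix m m ℝ) : Prop where
  isSymm : P.IsSymm
  mul_eq_zero : A * P = 0
  mulVec_eq_self : ∀ v : m → ℝ, A *ᵥ v = 0 → P *ᵥ v = v

section MoorePenrose

variable {m : Type*} [Fintype m] {A Adag P : Matrix m m ℝ}

lemma IsKerProj.mul_eq_self (hP : IsKerProj A P) {M : Matrix m m ℝ} (hM : A * M = 0) :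
    P * M = M := by
  refine mulVec_injective (funext fun v => ?_)
  rw [← mulVec_mulVec]
  exact hP.mulVec_eq_self _ (by rw [mulVec_mulVec, hM, zero_mulVec])

lemma IsKerProj.mul_self (hP : IsKerProj A P) : P * P = P :=
  hP.mul_eq_self hP.mul_eq_zero

variable [DecidableEq m]

lemma IsMoorePenrose.pinv_mul_eq_one_sub (hA : IsMoorePenrose A Adag) (hP : IsKerProj A P) :
    Adag * A = 1 - P := by
  obtain ⟨hAKA, -, -, hKA⟩ := hA
  set Q := 1 - Adag * A with hQ
  have hQ_symm : Qᵀ = Q := by rw [hQ, transpose_sub, transpose_one, hKA]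
  have hAQ : A * Q = 0 := by rw [hQ, mul_sub, mul_one, ← mul_assoc, hAKA, sub_self]
  have hQP : Q * P = P := by
    rw [hQ, sub_mul, one_mul, mul_assoc, hP.mul_eq_zero, mul_zero, sub_zero]
  have hQ_eq : Q = P := by
    rw [← hQ_symm, ← hP.mul_eq_self hAQ, transpose_mul, hQ_symm, hP.isSymm.eq, hQP]
  rw [← hQ_eq, hQ, sub_sub_cancel]

lemma IsMoorePenrose.add_mul_add_eq_one (hA : IsMoorePenrose A Adag) (hP : IsKerProj A P)
    (hPA : P * A = 0) : (Adag + P) * (A + P) = 1 := by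
  have hKA : Adag * A = 1 - P := hA.pinv_mul_eq_one_sub hP
  obtain ⟨-, hKAK, hAK, -⟩ := hA
  have hAKP : A * Adag * P = 0 := by
    rw [← hAK, ← hP.isSymm.eq, ← transpose_mul, ← mul_assoc, hPA, zero_mul, transpose_zero]
  have hKP : Adag * P = 0 := by
    rw [← hKAK, mul_assoc, mul_assoc, ← mul_assoc A, hAKP, mul_zero]
  rw [add_mul, mul_add, mul_add, hKA, hKP, hPA, hP.mul_self]
  abel

lemma IsMoorePenrose.inv_add_eq_pinv_add (hA : IsMoorePenrose A Adag) (hP : IsKerProj A P)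
    (hPA : P * A = 0) : (A + P)⁻¹ = Adag + P :=
  inv_eq_left_inv (hA.add_mul_add_eq_one hP hPA)

lemma IsMoorePenrose.mul_pinv_eq_one_sub (hA : IsMoorePenrose A Adag) (hP : IsKerProj A P)
    (hPA : P * A = 0) : A * Adag = 1 - P := by
  have hPK : P * Adag = 0 := by
    rw [← hA.2.1, hA.pinv_mul_eq_one_sub hP, ← mul_assoc, mul_sub, mul_one, hP.mul_self,
      sub_self, zero_mul]
  have h_inv : (A + P) * (Adag + P) = 1 := mul_eq_one_comm.1 (hA.add_mul_add_eq_one hP hPA)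
  rw [add_mul, mul_add, mul_add, hP.mul_eq_zero, hPK, hP.mul_self, add_zero, zero_add] at h_inv
  exact eq_sub_of_add_eq h_inv

end MoorePenrose

section Kronecker

variable {n s : ℕ}

lemma JKron_eq_oneKron_mul_transpose : JKron n s = oneKron n s * (oneKron n s)ᵀ := by
  ext p q
  simp [JKron, oneKron, mul_apply, one_apply, eq_comm]

lemma isSymm_JKron : (JKron n s).IsSymm := by
  rw [IsSymm, JKron_eq_oneKron_mul_transpose, transpose_mul, transpose_transpose]

lemma JKron_mul_oneKron : JKron n s * oneKron n s = (n : ℝ) • oneKron n s := by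
  have h_gram : (oneKron n s)ᵀ * oneKron n s = (n : ℝ) • 1 := by
    ext a b
    by_cases h : a = b <;> simp [oneKron, mul_apply, Fintype.sum_prod_type, one_apply, h, Ne.symm]
  rw [JKron_eq_oneKron_mul_transpose, Matrix.mul_assoc, h_gram, Matrix.mul_smul, Matrix.mul_one]

lemma bdiag_add (M N : Matrix (Fin n × Fin s) (Fin n × Fin s) ℝ) :
    bdiag (M + N) = bdiag M + bdiag N := by
  ext p q
  by_cases h : p.1 = q.1 <;> simp [bdiag, h]

lemma bdiag_smul (c : ℝ) (M : Matrix (Fin n × Fin s) (Fin n × Fin s) ℝ) :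
    bdiag (c • M) = c • bdiag M := by
  ext p q
  simp [bdiag]

lemma bdiag_JKron : bdiag (JKron n s) = 1 := by
  ext p q
  by_cases h : p.1 = q.1 <;> simp [bdiag, JKron, one_apply, Prod.ext_iff, h]

lemma bdiag_mul_oneKron_apply (M : Matrix (Fin n × Fin s) (Fin n × Fin s) ℝ)
    (p : Fin n × Fin s) (b : Fin s) : (bdiag M * oneKron n s) p b = M p (p.1, b) := by
  simp [bdiag, oneKron, mul_apply, Fintype.sum_prod_type]

end Kronecker

section Laplacian

variable {n s : ℕ} (G : SimpleGraph (Fin n)) [DecidableRel G.Adj]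
  (W : Fin n → Fin n → Matrix (Fin s) (Fin s) ℝ)

lemma lap_apply (p q : Fin n × Fin s) :
    lap G W p q =
      (if p.1 = q.1 then ∑ k with G.Adj p.1 k, (W p.1 k)⁻¹ p.2 q.2 else 0) -
        if G.Adj p.1 q.1 then (W p.1 q.1)⁻¹ p.2 q.2 else 0 := by
  by_cases h : p.1 = q.1 <;> by_cases h' : G.Adj p.1 q.1 <;> simp_all [lap, Matrix.sum_apply]

lemma lap_mul_apply {t : Type*} (M : Matrix (Fin n × Fin s) t ℝ) (p : Fin n × Fin s) (b : t) :
    (lap G W * M) p b =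
      ∑ j with G.Adj p.1 j, ∑ c, (W p.1 j)⁻¹ p.2 c * (M (p.1, c) b - M (j, c) b) := by
  have h_diag : ∑ q, (if p.1 = q.1 then ∑ k with G.Adj p.1 k, (W p.1 k)⁻¹ p.2 q.2 else 0) * M q b =
      ∑ j with G.Adj p.1 j, ∑ c, (W p.1 j)⁻¹ p.2 c * M (p.1, c) b := by
    rw [Fintype.sum_prod_type, Fintype.sum_eq_single p.1 (by simp +contextual [eq_comm]),
      Finset.sum_comm]
    simp [Finset.sum_mul]
  have h_off : ∑ q, (if G.Adj p.1 q.1 then (W p.1 q.1)⁻¹ p.2 q.2 else 0) * M q b =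
      ∑ j with G.Adj p.1 j, ∑ c, (W p.1 j)⁻¹ p.2 c * M (j, c) b := by
    rw [Fintype.sum_prod_type, sum_filter]
    refine sum_congr rfl fun j _ => ?_
    split_ifs <;> simp
  simp only [mul_apply, lap_apply, sub_mul, sum_sub_distrib, h_diag, h_off, mul_sub]

lemma lap_mul_oneKron : lap G W * oneKron n s = 0 := by
  ext p b
  simp [lap_mul_apply, oneKron]

lemma lap_mul_JKron : lap G W * JKron n s = 0 := by
  rw [JKron_eq_oneKron_mul_transpose, ← Matrix.mul_assoc, lap_mul_oneKron, Matrix.zero_mul]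

lemma tauMat_resist (K : Matrix (Fin n × Fin s) (Fin n × Fin s) ℝ) :
    tauMat G W (resist K) =
      lap G W * bdiag K * oneKron n s + (2 : ℝ) • (bdiag (1 - lap G W * K) * oneKron n s) := by
  ext p b
  have h_one : (1 : Matrix (Fin n × Fin s) (Fin n × Fin s) ℝ) p (p.1, b) =
      (1 : Matrix (Fin s) (Fin s) ℝ) p.2 b := by simp [one_apply, Prod.ext_iff]
  have h_sum : ∑ j with G.Adj p.1 j, ∑ c, (W p.1 j)⁻¹ p.2 c * resist K (j, c) (p.1, b) =
      2 * (lap G W * K) p (p.1, b) - (lap G W * (bdiag K * oneKron n s)) p b := by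
    simp only [lap_mul_apply, bdiag_mul_oneKron_apply, resist, of_apply, mul_sum,
      ← sum_sub_distrib]
    refine sum_congr rfl fun j _ => sum_congr rfl fun c _ => ?_
    ring
  calc tauMat G W (resist K) p b
      = 2 * (1 : Matrix (Fin s) (Fin s) ℝ) p.2 b -
          ∑ j with G.Adj p.1 j, ∑ c, (W p.1 j)⁻¹ p.2 c * resist K (j, c) (p.1, b) := by
        simp [tauMat, blk, Matrix.sum_apply, mul_apply]
    _ = (lap G W * (bdiag K * oneKron n s)) p b + 2 * (1 - lap G W * K) p (p.1, b) := by
        rw [h_sum, Matrix.sub_apply, h_one]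
        ring
    _ = _ := by
        rw [Matrix.add_apply, Matrix.smul_apply, bdiag_mul_oneKron_apply, Matrix.mul_assoc,
          smul_eq_mul]

variable {G W}

lemma transpose_lap (hW : ∀ i j, G.Adj i j → W i j = W j i) :
    (lap G W)ᵀ = lap G fun i j => (W i j)ᵀ := by
  ext p q
  by_cases h : p.1 = q.1
  · simp [lap, h, Matrix.sum_apply, ← transpose_nonsing_inv]
  · by_cases hadj : G.Adj p.1 q.1
    · simp [lap, h, Ne.symm h, hadj, hadj.symm, hW _ _ hadj, ← transpose_nonsing_inv]
    · simp [lap, h, Ne.symm h, hadj, G.adj_comm q.1]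

lemma JKron_mul_lap (hW : ∀ i j, G.Adj i j → W i j = W j i) : JKron n s * lap G W = 0 := by
  rw [← transpose_transpose (JKron n s * lap G W), transpose_mul, transpose_lap hW,
    isSymm_JKron.eq, lap_mul_JKron, transpose_zero]

lemma isKerProj_lap [NeZero n]
    (hker : ∀ v, lap G W *ᵥ v = 0 → ∃ c, v = oneKron n s *ᵥ c) :
    IsKerProj (lap G W) ((n : ℝ)⁻¹ • JKron n s) where
  isSymm := isSymm_JKron.smul _
  mul_eq_zero := by rw [Matrix.mul_smul, lap_mul_JKron, smul_zero]
  mulVec_eq_self v hv := by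
    obtain ⟨c, rfl⟩ := hker v hv
    rw [mulVec_mulVec, Matrix.smul_mul, JKron_mul_oneKron, inv_smul_smul₀ (NeZero.ne (n : ℝ))]

end Laplacian

theorem lap_bdiag_oneKron_eq_tau_general {n s : ℕ} [NeZero n]
    (G : SimpleGraph (Fin n)) [DecidableRel G.Adj]
    (W : Fin n → Fin n → Matrix (Fin s) (Fin s) ℝ)
    (hWsymm : ∀ i j, G.Adj i j → W i j = W j i)
    (_hWunit : ∀ i j, G.Adj i j → IsUnit (W i j))
    (hker : ∀ v, lap G W *ᵥ v = 0 → ∃ c, v = oneKron n s *ᵥ c)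
    (Ldag : Matrix (Fin n × Fin s) (Fin n × Fin s) ℝ) (hMP : IsMoorePenrose (lap G W) Ldag) :
    lap G W * bdiag (lap G W + (n : ℝ)⁻¹ • JKron n s)⁻¹ * oneKron n s +
      ((2 : ℝ) / n) • oneKron n s = tauMat G W (resist Ldag) := by
  set L := lap G W
  set P := (n : ℝ)⁻¹ • JKron n s with hP
  have hLP : IsKerProj L P := isKerProj_lap hker
  have hPL : P * L = 0 := by rw [hP, Matrix.smul_mul, JKron_mul_lap hWsymm, smul_zero]
  have hbdiag : bdiag P = (n : ℝ)⁻¹ • 1 := by rw [hP, bdiag_smul, bdiag_JKron]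
  calc L * bdiag (L + P)⁻¹ * oneKron n s + ((2 : ℝ) / n) • oneKron n s
      = L * bdiag Ldag * oneKron n s + (n : ℝ)⁻¹ • (L * oneKron n s) +
          ((2 : ℝ) / n) • oneKron n s := by
        rw [hMP.inv_add_eq_pinv_add hLP hPL, bdiag_add, hbdiag, Matrix.mul_add, Matrix.add_mul,
          Matrix.mul_smul, Matrix.mul_one, Matrix.smul_mul]
    _ = L * bdiag Ldag * oneKron n s + (2 : ℝ) • (bdiag P * oneKron n s) := by
        rw [lap_mul_oneKron, smul_zero, add_zero, hbdiag, Matrix.smul_mul, Matrix.one_mul,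
          smul_smul, div_eq_mul_inv]
    _ = tauMat G W (resist Ldag) := by
        rw [tauMat_resist, hMP.mul_pinv_eq_one_sub hLP hPL, sub_sub_cancel]

/-- `L X̄ (1 ⊗ Iₛ) + (2/n)(1 ⊗ Iₛ) = τ`. -/
theorem lap_bdiag_oneKron_eq_tau
    (n s : ℕ) (hn : 2 ≤ n) (hs : 1 ≤ s)
    (G : SimpleGraph (Fin n)) [DecidableRel G.Adj] (hconn : G.Connected)
    (W : Fin n → Fin n → Matrix (Fin s) (Fin s) ℝ)
    (hWsymm : ∀ i j, W i j = W j i)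
    (hWpd : ∀ i j, G.Adj i j → (W i j).PosDef)
    (hPSD : (lap G W).PosSemidef)
    (hrank : (lap G W).rank = n * s - s)
    (hker : ∀ v : Fin n × Fin s → ℝ,
      lap G W *ᵥ v = 0 ↔ ∃ c : Fin s → ℝ, v = oneKron n s *ᵥ c)
    (X : Matrix (Fin n × Fin s) (Fin n × Fin s) ℝ)
    (hX : X = (lap G W + ((n : ℝ)⁻¹) • JKron n s)⁻¹)
    (Ldag : Matrix (Fin n × Fin s) (Fin n × Fin s) ℝ)
    (hMP : IsMoorePenrose (lap G W) Ldag)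
    (R : Matrix (Fin n × Fin s) (Fin n × Fin s) ℝ)
    (hR : R = resist Ldag) :
    lap G W * bdiag X * oneKron n s + ((2 : ℝ) / n) • oneKron n s = tauMat G W R := by
  have : NeZero n := ⟨by lia⟩
  subst hX hR
  exact lap_bdiag_oneKron_eq_tau_general G W (fun i j _ => hWsymm i j)
    (fun i j hij => (hWpd i j hij).isUnit) (fun v => (hker v).1) Ldag hMP
end
end

section
/- (1ᵀ ⊗ I_s) τ = 2 I_s; equivalently, τᵀ (1 ⊗ I_s) = 2 I_s. -/
open Matrix Finset
open scoped Kronecker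

noncomputable section

/-!
For symmetric conductances `C i j = C j i`, the Laplacian `L` annihilates `U = 1 ⊗ Iₛ` from both
sides. Suppose `ker L` is no larger than the column space of `U`, let `P` be the orthogonal
projection onto that space, and let `L K L = L` with `L K` symmetric. Then `I - P - L K` is an
orthogonal projection of trace zero, so `L K = I - P`. In `∑ᵢ ∑ⱼ C i j R_{ji}` the terms `K_{ii}`
and `K_{jj}` contribute equally by symmetry, so this double sum is twice the sum of the diagonal
blocks of `L K = I - P`, i.e. `2 (n - 1) Iₛ` (Foster's theorem for matrix weights). Subtracting it
from `∑ᵢ 2 Iₛ = 2 n Iₛ` leaves `2 Iₛ`.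
-/

section LeastSquaresInverse

variable {m α : Type*} [Fintype m] [PartialOrder α]

theorem eq_zero_of_isStarProjection_of_trace_eq_zero [NonUnitalRing α] [StarRing α]
    [StarOrderedRing α] [NoZeroDivisors α] {P : Matrix m m α} (hP : IsStarProjection P)
    (htrace : P.trace = 0) : P = 0 := by
  rw [← trace_conjTranspose_mul_self_eq_zero_iff, ← star_eq_conjTranspose,
    hP.isSelfAdjoint.star_eq, hP.isIdempotentElem.eq, htrace]

theorem mul_eq_one_sub_of_isStarProjection [DecidableEq m] [CommRing α] [StarRing α]
    [StarOrderedRing α] [NoZeroDivisors α] {A K P : Matrix m m α}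
    (hP : IsStarProjection P) (hPA : P * A = 0) (hAP : A * P = 0)
    (hker : ∀ v, A *ᵥ v = 0 → P *ᵥ v = v)
    (hAKA : A * K * A = A) (hAK : IsSelfAdjoint (A * K)) : A * K = 1 - P := by
  have hproj : IsStarProjection (A * K) := ⟨by rw [IsIdempotentElem, ← mul_assoc, hAKA], hAK⟩
  have hsub : IsStarProjection (1 - P - A * K) :=
    hproj.sub_of_mul_eq_right hP.one_sub <| by
      rw [sub_mul, one_mul, ← mul_assoc, hPA, zero_mul, sub_zero]
  have hfix : P * (1 - K * A) = 1 - K * A := by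
    have hA : A * (1 - K * A) = 0 := by rw [mul_sub, mul_one, ← mul_assoc, hAKA, sub_self]
    exact ext_col fun j => hker _ congr(($hA).col j)
  have htrace : (1 - K * A).trace = P.trace := by
    rw [← hfix, trace_mul_comm, sub_mul, one_mul, mul_assoc, hAP, mul_zero, sub_zero]
  refine (sub_eq_zero.mp (eq_zero_of_isStarProjection_of_trace_eq_zero hsub ?_)).symm
  rw [sub_right_comm, trace_sub, trace_sub, trace_mul_comm A, ← trace_sub, htrace, sub_self]

end LeastSquaresInverse

section MeanProjection

variable {n s : ℕ}

theorem oneKron_transpose_mul_apply {m : Type*} (A : Matrix (Fin n × Fin s) m ℝ)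
    (a : Fin s) (q : m) : ((oneKron n s)ᵀ * A) a q = ∑ i, A (i, a) q := by
  simp [oneKron, mul_apply, Fintype.sum_prod_type]

variable (n s) in
/-- The matrix `(1/n) J ⊗ Iₛ`: the orthogonal projection onto the column space of `1 ⊗ Iₛ`, which
replaces each member of an `n`-tuple of vectors by the mean of the tuple. -/
def meanProj : Matrix (Fin n × Fin s) (Fin n × Fin s) ℝ :=
  (n : ℝ)⁻¹ • (oneKron n s * (oneKron n s)ᵀ)

variable (n s) in
theorem oneKron_transpose_mul_self : (oneKron n s)ᵀ * oneKron n s = (n : ℝ) • 1 := by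
  ext a b
  rw [oneKron_transpose_mul_apply]
  obtain rfl | hab := eq_or_ne a b
  · simp [oneKron]
  · simp [oneKron, hab]

theorem meanProj_mul_oneKron (hn : n ≠ 0) : meanProj n s * oneKron n s = oneKron n s := by
  rw [meanProj, smul_mul, Matrix.mul_assoc, oneKron_transpose_mul_self, Matrix.mul_smul,
    Matrix.mul_one, inv_smul_smul₀ (Nat.cast_ne_zero.mpr hn)]

theorem isStarProjection_meanProj (hn : n ≠ 0) : IsStarProjection (meanProj n s) where
  isIdempotentElem := by
    rw [IsIdempotentElem]
    nth_rw 2 [meanProj]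
    rw [Matrix.mul_smul, ← Matrix.mul_assoc, meanProj_mul_oneKron hn, ← meanProj]
  isSelfAdjoint := by
    simp [isSelfAdjoint_iff, star_eq_conjTranspose, meanProj]

theorem blk_one_sub_meanProj_self (i : Fin n) :
    blk (1 - meanProj n s) i i = (1 - (n : ℝ)⁻¹) • 1 := by
  ext a b
  obtain rfl | hab := eq_or_ne a b
  · simp [blk, meanProj, oneKron, mul_apply]
  · simp [blk, meanProj, oneKron, mul_apply, hab]

end MeanProjection

section Conductance

variable {n s : ℕ}

/-- The Laplacian of a network on `n` vertices with matrix conductances `C i j`, where `C i j = 0`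
encodes a missing edge. The conductances `C i i` cancel. -/
def conductanceLap (C : Fin n → Fin n → Matrix (Fin s) (Fin s) ℝ) :
    Matrix (Fin n × Fin s) (Fin n × Fin s) ℝ :=
  comp _ _ _ _ ℝ (diagonal (fun i => ∑ k, C i k) - of C)

/-- The matrix `τ` of a network with conductances `C` and resistance matrix `R`: its `i`-th block is
`2 Iₛ - ∑ⱼ C i j R_{ji}`. -/
def conductanceTau (C : Fin n → Fin n → Matrix (Fin s) (Fin s) ℝ)
    (R : Matrix (Fin n × Fin s) (Fin n × Fin s) ℝ) : Matrix (Fin n × Fin s) (Fin s) ℝ :=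
  of fun p b => ((2 : ℝ) • (1 : Matrix (Fin s) (Fin s) ℝ) - ∑ j, C p.1 j * blk R j p.1) p.2 b

theorem blk_mul (A B : Matrix (Fin n × Fin s) (Fin n × Fin s) ℝ) (i j : Fin n) :
    blk (A * B) i j = ∑ k, blk A i k * blk B k j := by
  ext a b
  simp [blk, mul_apply, Matrix.sum_apply, Fintype.sum_prod_type]

theorem blk_conductanceLap (C : Fin n → Fin n → Matrix (Fin s) (Fin s) ℝ) (i j : Fin n) :
    blk (conductanceLap C) i j = diagonal (fun i => ∑ k, C i k) i j - C i j :=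
  rfl

theorem blk_resist (K : Matrix (Fin n × Fin s) (Fin n × Fin s) ℝ) (i j : Fin n) :
    blk (resist K) i j = blk K i i + blk K j j - (2 : ℝ) • blk K i j :=
  rfl

theorem oneKron_transpose_mul_conductanceTau (C : Fin n → Fin n → Matrix (Fin s) (Fin s) ℝ)
    (R : Matrix (Fin n × Fin s) (Fin n × Fin s) ℝ) :
    (oneKron n s)ᵀ * conductanceTau C R = (2 * n : ℝ) • 1 - ∑ i, ∑ j, C i j * blk R j i := by
  ext a b
  simp only [oneKron_transpose_mul_apply, conductanceTau, of_apply, ← Matrix.sum_apply,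
    sum_sub_distrib, sum_const, card_univ, Fintype.card_fin, ← Nat.cast_smul_eq_nsmul ℝ, smul_smul,
    mul_comm]

theorem conductanceLap_mul_oneKron (C : Fin n → Fin n → Matrix (Fin s) (Fin s) ℝ) :
    conductanceLap C * oneKron n s = 0 := by
  ext ⟨i, a⟩ b
  simp [conductanceLap, oneKron, mul_apply, Fintype.sum_prod_type, diagonal_apply,
    ← Matrix.sum_apply]

variable {C : Fin n → Fin n → Matrix (Fin s) (Fin s) ℝ}

theorem oneKron_transpose_mul_conductanceLap (hC : ∀ i j, C i j = C j i) :
    (oneKron n s)ᵀ * conductanceLap C = 0 := by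
  ext a ⟨j, b⟩
  simp [oneKron_transpose_mul_apply, conductanceLap, diagonal_apply, ← Matrix.sum_apply, hC j]

theorem conductanceLap_mul_eq_one_sub_meanProj (hn : n ≠ 0) (hC : ∀ i j, C i j = C j i)
    (hker : ∀ v, conductanceLap C *ᵥ v = 0 → ∃ c, v = oneKron n s *ᵥ c)
    {K : Matrix (Fin n × Fin s) (Fin n × Fin s) ℝ}
    (hLKL : conductanceLap C * K * conductanceLap C = conductanceLap C)
    (hLK : (conductanceLap C * K)ᵀ = conductanceLap C * K) :
    conductanceLap C * K = 1 - meanProj n s := by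
  refine mul_eq_one_sub_of_isStarProjection (isStarProjection_meanProj hn) ?_ ?_ ?_ hLKL hLK
  · rw [meanProj, smul_mul, Matrix.mul_assoc, oneKron_transpose_mul_conductanceLap hC,
      Matrix.mul_zero, smul_zero]
  · rw [meanProj, Matrix.mul_smul, ← Matrix.mul_assoc, conductanceLap_mul_oneKron, Matrix.zero_mul,
      smul_zero]
  · intro v hv
    obtain ⟨c, rfl⟩ := hker v hv
    rw [mulVec_mulVec, meanProj_mul_oneKron hn]

theorem sum_conductance_mul_blk_resist (hC : ∀ i j, C i j = C j i)
    (K : Matrix (Fin n × Fin s) (Fin n × Fin s) ℝ) :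
    ∑ i, ∑ j, C i j * blk (resist K) j i = (2 : ℝ) • ∑ i, blk (conductanceLap C * K) i i := by
  have hswap : ∑ i, ∑ j, C i j * blk K j j = ∑ i, ∑ j, C i j * blk K i i := by
    rw [sum_comm]
    exact sum_congr rfl fun i _ => sum_congr rfl fun j _ => by rw [hC j i]
  have hdiag (i : Fin n) :
      blk (conductanceLap C * K) i i = ∑ j, C i j * blk K i i - ∑ j, C i j * blk K j i := by
    simp only [blk_mul, blk_conductanceLap, diagonal_apply, sub_mul, ite_mul, zero_mul,
      sum_sub_distrib, sum_ite_eq, mem_univ, if_true, sum_mul]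
  simp only [hdiag, blk_resist, mul_sub, mul_add, sum_sub_distrib, sum_add_distrib, hswap,
    Matrix.mul_smul, smul_sub, ← smul_sum]
  module

theorem oneKron_transpose_mul_tau_general (hn : n ≠ 0) (hC : ∀ i j, C i j = C j i)
    (hker : ∀ v, conductanceLap C *ᵥ v = 0 → ∃ c, v = oneKron n s *ᵥ c)
    {K : Matrix (Fin n × Fin s) (Fin n × Fin s) ℝ}
    (hLKL : conductanceLap C * K * conductanceLap C = conductanceLap C)
    (hLK : (conductanceLap C * K)ᵀ = conductanceLap C * K) :
    (oneKron n s)ᵀ * conductanceTau C (resist K) = (2 : ℝ) • 1 ∧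
      (conductanceTau C (resist K))ᵀ * oneKron n s = (2 : ℝ) • 1 := by
  have hfoster : ∑ i, ∑ j, C i j * blk (resist K) j i = (2 * (n - 1) : ℝ) • 1 := by
    rw [sum_conductance_mul_blk_resist hC,
      conductanceLap_mul_eq_one_sub_meanProj hn hC hker hLKL hLK]
    simp only [blk_one_sub_meanProj_self, sum_const, card_univ, Fintype.card_fin,
      ← Nat.cast_smul_eq_nsmul ℝ, smul_smul]
    congr 1
    field_simp
  have hτ : (oneKron n s)ᵀ * conductanceTau C (resist K) = (2 : ℝ) • 1 := by
    rw [oneKron_transpose_mul_conductanceTau, hfoster, ← sub_smul]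
    congr 1
    ring
  exact ⟨hτ, by simpa using congr(($hτ)ᵀ)⟩

end Conductance

section WeightedGraph

variable {n s : ℕ} (G : SimpleGraph (Fin n)) [DecidableRel G.Adj]
  (W : Fin n → Fin n → Matrix (Fin s) (Fin s) ℝ)

/-- The conductances of a weighted graph: the inverse weight on an edge, and zero elsewhere. -/
def edgeConductance (i j : Fin n) : Matrix (Fin s) (Fin s) ℝ :=
  if G.Adj i j then (W i j)⁻¹ else 0

theorem lap_eq_conductanceLap : lap G W = conductanceLap (edgeConductance G W) := by
  ext ⟨i, a⟩ ⟨j, b⟩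
  obtain rfl | hij := eq_or_ne i j
  · simp [lap, conductanceLap, edgeConductance, sum_filter]
  · by_cases hadj : G.Adj i j <;> simp [lap, conductanceLap, edgeConductance, hij, hadj]

theorem tauMat_eq_conductanceTau (R : Matrix (Fin n × Fin s) (Fin n × Fin s) ℝ) :
    tauMat G W R = conductanceTau (edgeConductance G W) R := by
  simp only [tauMat, conductanceTau, edgeConductance, sum_filter, ite_mul, zero_mul]

variable {W} in
theorem edgeConductance_comm (hW : ∀ i j, W i j = W j i) (i j : Fin n) :
    edgeConductance G W i j = edgeConductance G W j i := by
  simp only [edgeConductance, hW i j, G.adj_comm i j]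

end WeightedGraph

/-- `(1ᵀ ⊗ Iₛ) τ = 2 Iₛ`; equivalently `τᵀ (1 ⊗ Iₛ) = 2 Iₛ`. -/
theorem oneKron_transpose_mul_tau
    (n s : ℕ) (hn : 2 ≤ n) (hs : 1 ≤ s)
    (G : SimpleGraph (Fin n)) [DecidableRel G.Adj] (hconn : G.Connected)
    (W : Fin n → Fin n → Matrix (Fin s) (Fin s) ℝ)
    (hWsymm : ∀ i j, W i j = W j i)
    (hWpd : ∀ i j, G.Adj i j → (W i j).PosDef)
    (hPSD : (lap G W).PosSemidef)
    (hrank : (lap G W).rank = n * s - s)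
    (hker : ∀ v : Fin n × Fin s → ℝ,
      lap G W *ᵥ v = 0 ↔ ∃ c : Fin s → ℝ, v = oneKron n s *ᵥ c)
    (Ldag : Matrix (Fin n × Fin s) (Fin n × Fin s) ℝ)
    (hMP : IsMoorePenrose (lap G W) Ldag)
    (R : Matrix (Fin n × Fin s) (Fin n × Fin s) ℝ)
    (hR : R = resist Ldag) :
    (oneKron n s)ᵀ * tauMat G W R = (2 : ℝ) • (1 : Matrix (Fin s) (Fin s) ℝ) ∧
      (tauMat G W R)ᵀ * oneKron n s = (2 : ℝ) • (1 : Matrix (Fin s) (Fin s) ℝ) := by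
  rw [lap_eq_conductanceLap] at hMP
  simp only [lap_eq_conductanceLap] at hker
  rw [hR, tauMat_eq_conductanceTau]
  exact oneKron_transpose_mul_tau_general (by lia) (edgeConductance_comm G hWsymm)
    (fun v => (hker v).mp) hMP.1 hMP.2.2.1
end
end

section
/- Σ_{i=1}^n Σ_{j∼i} W_{ij}⁻¹ R_{ji} = 2(n−1) I_s. -/
open Matrix Finset
open scoped Kronecker

noncomputable section

/-!
View an `ns × ns` real matrix as an `n × n` matrix over the ring `D` of `s × s` real matrices, and
let `A` be the matrix of conductances, so that `L = diag(∑ⱼ Aᵢⱼ) - A`. Since `Aᵢⱼ = Aⱼᵢ`, the sum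
of `Aᵢⱼ (Kⱼⱼ + Kᵢᵢ - 2 Kⱼᵢ)` is twice the sum of `Aᵢⱼ (Kᵢᵢ - Kⱼᵢ)`, which is `trace (L K)`, a trace
with values in `D`. From `L K L = L`, the rows of `1 - L K` lie in the left kernel of `L`, hence
are constant; from `1ᵀ L = 0`, its columns sum to `1`. So `trace (1 - L K) = 1`.
-/

section WeightedLaplacian

variable {V D : Type*} [Ring D]

/-- The matrix of resistances `K i i + K j j - 2 K i j` of a graph on `V` whose Laplacian has the
generalized inverse `K`, over a ring `D` that need not be commutative. -/
def resistance (K : Matrix V V D) : Matrix V V D :=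
  of fun i j => K i i + K j j - 2 * K i j

variable [Fintype V]

theorem trace_mul_eq_card_sub_one [Nonempty V] {L K : Matrix V V D} (hLKL : L * K * L = L)
    (hone : 1 ᵥ* L = 0) (hker : ∀ x : V → D, x ᵥ* L = 0 → ∀ i j, x i = x j) :
    trace (L * K) = (Fintype.card V : D) - 1 := by
  classical
  obtain ⟨j⟩ := ‹Nonempty V›
  have hrow (i : V) : (1 - L * K) i i = (1 - L * K) i j := by
    refine hker _ ?_ i j
    rw [← mul_apply_eq_vecMul, sub_mul, one_mul, hLKL, sub_self]
    rfl
  have hcol : 1 ᵥ* (1 - L * K) = 1 := by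
    rw [vecMul_sub, vecMul_one, ← vecMul_vecMul, hone, zero_vecMul, sub_zero]
  have htrace : trace (1 - L * K) = 1 := calc
    trace (1 - L * K) = ∑ i, (1 - L * K) i j := Finset.sum_congr rfl fun i _ => hrow i
    _ = (1 ᵥ* (1 - L * K)) j := (one_dotProduct _).symm
    _ = 1 := congrFun hcol j
  rw [trace_sub, trace_one] at htrace
  rw [← htrace, sub_sub_cancel]

variable [DecidableEq V]

/-- The Laplacian of a graph on `V` whose edge `{i, j}` has conductance `A i j` in a ring `D`.
Non-adjacent vertices have conductance `0`, and the diagonal of `A` cancels. -/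
def weightedLaplacian (A : Matrix V V D) : Matrix V V D :=
  diagonal (fun i => ∑ j, A i j) - A

theorem one_vecMul_weightedLaplacian {A : Matrix V V D} (hA : A.IsSymm) :
    1 ᵥ* weightedLaplacian A = 0 := by
  ext j
  have hcol : (1 ᵥ* A) j = ∑ i, A j i := by
    simp only [vecMul, one_dotProduct, hA.apply]
  rw [weightedLaplacian, vecMul_sub, Pi.sub_apply, vecMul_diagonal, hcol, Pi.one_apply, one_mul,
    sub_self, Pi.zero_apply]

theorem trace_weightedLaplacian_mul (A K : Matrix V V D) :
    trace (weightedLaplacian A * K) = ∑ i, ∑ j, A i j * (K i i - K j i) := by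
  rw [weightedLaplacian, sub_mul, trace_sub]
  simp only [trace, diag_apply, diagonal_mul, mul_apply (M := A), Finset.sum_mul, mul_sub,
    Finset.sum_sub_distrib]

theorem sum_mul_resistance {A : Matrix V V D} (hA : A.IsSymm) (K : Matrix V V D) :
    ∑ i, ∑ j, A i j * resistance K j i = 2 * trace (weightedLaplacian A * K) := by
  have hsplit (i j : V) : A i j * resistance K j i =
      A i j * (K i i - K j i) + A i j * (K j j - K j i) := by
    simp only [resistance, of_apply]
    noncomm_ring
  have hswap : ∑ i, ∑ j, A i j * K j j = ∑ i, ∑ j, A i j * K i i := by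
    rw [Finset.sum_comm]
    simp only [hA.apply]
  have htrace : ∑ i, ∑ j, A i j * (K j j - K j i) = trace (weightedLaplacian A * K) := by
    simp only [trace_weightedLaplacian_mul, mul_sub, Finset.sum_sub_distrib, hswap]
  simp only [hsplit, Finset.sum_add_distrib, htrace, ← trace_weightedLaplacian_mul, two_mul]

theorem sum_winv_resist_blocks_general [Nonempty V] {A : Matrix V V D} (hA : A.IsSymm)
    (hker : ∀ x : V → D, x ᵥ* weightedLaplacian A = 0 → ∀ i j, x i = x j) {K : Matrix V V D}
    (hK : weightedLaplacian A * K * weightedLaplacian A = weightedLaplacian A) :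
    ∑ i, ∑ j, A i j * resistance K j i = 2 * ((Fintype.card V : D) - 1) := by
  rw [sum_mul_resistance hA,
    trace_mul_eq_card_sub_one hK (one_vecMul_weightedLaplacian hA) hker]

end WeightedLaplacian

section Blocks

theorem row_vecMul_eq_vecMul_compRingEquiv_symm {V S R : Type*} [Fintype V] [Fintype S]
    [NonUnitalNonAssocSemiring R] (X : V → Matrix S S R) (M : Matrix (V × S) (V × S) R) (a : S) :
    (fun p : V × S => X p.1 a p.2) ᵥ* M =
      fun q => (X ᵥ* (compRingEquiv V S R).symm M) q.1 a q.2 := by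
  ext ⟨j, b⟩
  simp [vecMul, dotProduct, Fintype.sum_prod_type, Matrix.sum_apply, mul_apply]

variable {n s : ℕ}

theorem oneKron_mulVec_apply (c : Fin s → ℝ) (p : Fin n × Fin s) :
    (oneKron n s *ᵥ c) p = c p.2 := by
  simp [oneKron, mulVec, dotProduct]

theorem eq_of_vecMul_compRingEquiv_symm_eq_zero
    {L : Matrix (Fin n × Fin s) (Fin n × Fin s) ℝ} (hL : L.IsSymm)
    (hker : ∀ v, L *ᵥ v = 0 → ∃ c, v = oneKron n s *ᵥ c)
    (X : Fin n → Matrix (Fin s) (Fin s) ℝ)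
    (hX : X ᵥ* (compRingEquiv (Fin n) (Fin s) ℝ).symm L = 0) (i j : Fin n) : X i = X j := by
  ext a b
  obtain ⟨c, hc⟩ := hker (fun p => X p.1 a p.2) <| by
    rw [← vecMul_transpose, hL.eq, row_vecMul_eq_vecMul_compRingEquiv_symm, hX]
    rfl
  have hrow (k : Fin n) : X k a b = c b :=
    (congrFun hc (k, b)).trans (oneKron_mulVec_apply c (k, b))
  rw [hrow i, hrow j]

theorem compRingEquiv_symm_resist (K : Matrix (Fin n × Fin s) (Fin n × Fin s) ℝ) :
    (compRingEquiv (Fin n) (Fin s) ℝ).symm (resist K) =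
      resistance ((compRingEquiv (Fin n) (Fin s) ℝ).symm K) := by
  ext i j a b
  simp [resist, resistance, two_mul]

variable (G : SimpleGraph (Fin n)) [DecidableRel G.Adj]

/-- The matrix of conductances `(W i j)⁻¹` of the edges of `G`, extended by `0` to non-edges; its
`weightedLaplacian` is `lap G W` read as a matrix of blocks. -/
def conductance (W : Fin n → Fin n → Matrix (Fin s) (Fin s) ℝ) :
    Matrix (Fin n) (Fin n) (Matrix (Fin s) (Fin s) ℝ) :=
  of fun i j => if G.Adj i j then (W i j)⁻¹ else 0

theorem conductance_isSymm {W : Fin n → Fin n → Matrix (Fin s) (Fin s) ℝ}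
    (hW : ∀ i j, W i j = W j i) : (conductance G W).IsSymm := by
  ext1 i j
  simp only [conductance, transpose_apply, of_apply, G.adj_comm i j, hW i j]

theorem compRingEquiv_symm_lap (W : Fin n → Fin n → Matrix (Fin s) (Fin s) ℝ) :
    (compRingEquiv (Fin n) (Fin s) ℝ).symm (lap G W) = weightedLaplacian (conductance G W) := by
  ext i j a b
  obtain rfl | hij := eq_or_ne i j
  · simp [lap, weightedLaplacian, conductance, Finset.sum_filter]
  · by_cases hadj : G.Adj i j <;> simp [lap, weightedLaplacian, conductance, hij, hadj]

theorem sum_adj_inv_mul_blk_resist (W : Fin n → Fin n → Matrix (Fin s) (Fin s) ℝ)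
    (K : Matrix (Fin n × Fin s) (Fin n × Fin s) ℝ) :
    ∑ i, ∑ j ∈ univ.filter (fun j => G.Adj i j), (W i j)⁻¹ * blk (resist K) j i =
      ∑ i, ∑ j, conductance G W i j *
        resistance ((compRingEquiv (Fin n) (Fin s) ℝ).symm K) j i := by
  simp only [← compRingEquiv_symm_resist, conductance, of_apply, ite_mul, zero_mul,
    ← Finset.sum_filter]
  rfl

end Blocks

/-- `Σ_{i=1}^n Σ_{j ∼ i} (W i j)⁻¹ R_{ji} = 2(n-1) Iₛ`. -/
theorem sum_winv_resist_blocks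
    (n s : ℕ) (hn : 2 ≤ n) (hs : 1 ≤ s)
    (G : SimpleGraph (Fin n)) [DecidableRel G.Adj] (hconn : G.Connected)
    (W : Fin n → Fin n → Matrix (Fin s) (Fin s) ℝ)
    (hWsymm : ∀ i j, W i j = W j i)
    (hWpd : ∀ i j, G.Adj i j → (W i j).PosDef)
    (hPSD : (lap G W).PosSemidef)
    (hrank : (lap G W).rank = n * s - s)
    (hker : ∀ v : Fin n × Fin s → ℝ,
      lap G W *ᵥ v = 0 ↔ ∃ c : Fin s → ℝ, v = oneKron n s *ᵥ c)
    (Ldag : Matrix (Fin n × Fin s) (Fin n × Fin s) ℝ)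
    (hMP : IsMoorePenrose (lap G W) Ldag)
    (R : Matrix (Fin n × Fin s) (Fin n × Fin s) ℝ)
    (hR : R = resist Ldag) :
    ∑ i : Fin n, ∑ j ∈ univ.filter (fun j => G.Adj i j), (W i j)⁻¹ * blk R j i =
      (2 * ((n : ℝ) - 1)) • (1 : Matrix (Fin s) (Fin s) ℝ) := by
  have := hconn.nonempty
  have hconst := eq_of_vecMul_compRingEquiv_symm_eq_zero
    (isHermitian_iff_isSymm.1 hPSD.isHermitian) fun v => (hker v).1
  have hinv := congrArg (compRingEquiv (Fin n) (Fin s) ℝ).symm hMP.1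
  simp only [map_mul, compRingEquiv_symm_lap] at hconst hinv
  rw [hR, sum_adj_inv_mul_blk_resist,
    sum_winv_resist_blocks_general (conductance_isSymm G hWsymm) hconst hinv,
    Fintype.card_fin, ← Algebra.algebraMap_eq_smul_one, map_mul, map_sub, map_natCast, map_one,
    map_ofNat]
end
end
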